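/- Let p and q be positive integers and let τ be a permutation of [p+q] which is (p,q)-disconnected. Then #(τ) + #(τ⁻¹γ) ≤ p+q+2, and τ belongs to S_ann-nc(p,q) if and only if #(τ) + #(τ⁻¹γ) = p+q+2. -/

import Mathlib

/-- The permutation induced by `f` on the subset `B`: an element `b` is sent to the first
element of the sequence `f b, f (f b), f (f (f b)), ...` that lies in `B`
(and is left fixed if no iterate ever returns to `B`). -/
noncomputable def induced {α : Type*} (f : α → α) (B : Set α) (b : α) : α := by
  classical
  exact if h : ∃ k, 0 < k ∧ f^[k] b ∈ B then f^[Nat.find h] b else b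

/-- `A` is an orbit of the permutation `τ`. -/
def IsOrbit {α : Type*} (τ : Equiv.Perm α) (A : Set α) : Prop :=
  ∃ a, A = {b | τ.SameCycle a b}

/-- The number of orbits of `τ` (fixed points count as orbits). -/
noncomputable def numOrbits {α : Type*} (τ : Equiv.Perm α) : ℕ :=
  Set.ncard {A : Set α | IsOrbit τ A}

/-- `induced f S` acts on `a, b, c` as the 3-cycle `(a, b, c)`. -/
def MapsCyc3 {α : Type*} (f : α → α) (S : Set α) (a b c : α) : Prop :=
  induced f S a = b ∧ induced f S b = c ∧ induced f S c = a

/-- `induced f S` acts on `a, b, c, d` as the 4-cycle `(a, b, c, d)`. -/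
def MapsCyc4 {α : Type*} (f : α → α) (S : Set α) (a b c d : α) : Prop :=
  induced f S a = b ∧ induced f S b = c ∧ induced f S c = d ∧ induced f S d = a

/-- `induced f S` acts on `a, b, c, d` as the product of transpositions `(a, c)(b, d)`. -/
def MapsSwap2 {α : Type*} (f : α → α) (S : Set α) (a b c d : α) : Prop :=
  induced f S a = c ∧ induced f S c = a ∧ induced f S b = d ∧ induced f S d = b

/-- `induced f S` acts on `x, y` as the transposition `(x, y)`. -/
def MapsSwap {α : Type*} (f : α → α) (S : Set α) (x y : α) : Prop :=
  induced f S x = y ∧ induced f S y = x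

/-- `σ` is standard with respect to the "forward cycle" `γ₀`, i.e. `σ∣B = γ₀∣B` for
every orbit `B` of `σ`. -/
def DiscStandardRel {n : ℕ} (γ₀ σ : Equiv.Perm (Fin n)) : Prop :=
  ∀ A : Set (Fin n), IsOrbit σ A → ∀ b ∈ A, induced (⇑σ) A b = induced (⇑γ₀) A b

/-- The orbit partition of `σ` has no crossing: there are no `a < b < c < d` with
`a, c` in one orbit and `b, d` in a different orbit. -/
def OrbitsNoCrossing {n : ℕ} (σ : Equiv.Perm (Fin n)) : Prop :=
  ¬ ∃ a b c d : Fin n, a < b ∧ b < c ∧ c < d ∧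
      σ.SameCycle a c ∧ σ.SameCycle b d ∧ ¬ σ.SameCycle a b

/-- Disc non-crossing relative to a given forward cycle `γ₀`. -/
def DiscNCRel {n : ℕ} (γ₀ σ : Equiv.Perm (Fin n)) : Prop :=
  DiscStandardRel γ₀ σ ∧ OrbitsNoCrossing σ

/-- The set `S_disc-nc(n)` of disc non-crossing permutations of `[n]`
(here `[n] = {1, …, n}` is modelled by `Fin n`, and the forward cycle
`γ₀ = (1, 2, …, n)` is `finRotate n`). -/
def DiscNC {n : ℕ} (σ : Equiv.Perm (Fin n)) : Prop :=
  DiscNCRel (finRotate n) σ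

/-- The external points `{1, …, p}` (0-indexed: values `< p`). -/
def extSet (p q : ℕ) : Set (Fin (p + q)) := {i | (i : ℕ) < p}

/-- The internal points `{p+1, …, p+q}` (0-indexed: values `≥ p`). -/
def intSet (p q : ℕ) : Set (Fin (p + q)) := {i | p ≤ (i : ℕ)}

/-- `γ_ext = (1, 2, …, p)`, the forward cycle on the external points. -/
def gammaExt (p q : ℕ) : Equiv.Perm (Fin (p + q)) :=
  ((List.finRange (p + q)).take p).formPerm

/-- `γ_int = (p+1, p+2, …, p+q)`, the forward cycle on the internal points. -/
def gammaInt (p q : ℕ) : Equiv.Perm (Fin (p + q)) :=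
  ((List.finRange (p + q)).drop p).formPerm

/-- `γ = γ_ext · γ_int`. -/
def gammaAnn (p q : ℕ) : Equiv.Perm (Fin (p + q)) := gammaExt p q * gammaInt p q

/-- `λ_{x,y}`: the permutation fixing `x` and `y` and cycling the remaining points as
`(γ_ext(x), γ_ext²(x), …, γ_ext^{p-1}(x), γ_int(y), γ_int²(y), …, γ_int^{q-1}(y))`. -/
def lamPerm (p q : ℕ) (x y : Fin (p + q)) : Equiv.Perm (Fin (p + q)) :=
  (((List.range (p - 1)).map fun k => (gammaExt p q ^ (k + 1)) x) ++
    ((List.range (q - 1)).map fun k => (gammaInt p q ^ (k + 1)) y)).formPerm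

/-- `τ` is standard in `(p,q)`-annular sense. -/
def AnnStandard (p q : ℕ) (τ : Equiv.Perm (Fin (p + q))) : Prop :=
  (∀ A : Set (Fin (p + q)), IsOrbit τ A →
    (∀ b ∈ A ∩ extSet p q,
        induced (⇑τ) (A ∩ extSet p q) b = induced (⇑(gammaExt p q)) (A ∩ extSet p q) b) ∧
    (∀ b ∈ A ∩ intSet p q,
        induced (⇑τ) (A ∩ intSet p q) b = induced (⇑(gammaInt p q)) (A ∩ intSet p q) b)) ∧
  (∀ A : Set (Fin (p + q)), IsOrbit τ A →
    (A ∩ extSet p q).Nonempty → (A ∩ intSet p q).Nonempty →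
    (∃! a, a ∈ A ∩ extSet p q ∧ τ a ∈ intSet p q) ∧
    (∃! a, a ∈ A ∩ intSet p q ∧ τ a ∈ extSet p q))

/-- The annular crossing pattern (AC-1). -/
def AC1 (p q : ℕ) (τ : Equiv.Perm (Fin (p + q))) : Prop :=
  ∃ a b c d : Fin (p + q), List.Pairwise (· ≠ ·) [a, b, c, d] ∧
    MapsCyc4 (⇑(gammaAnn p q)) {a, b, c, d} a b c d ∧
    MapsSwap2 (⇑τ) {a, b, c, d} a b c d

/-- The annular crossing pattern (AC-2). -/
def AC2 (p q : ℕ) (τ : Equiv.Perm (Fin (p + q))) : Prop :=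
  ∃ a b c x y : Fin (p + q), List.Pairwise (· ≠ ·) [a, b, c, x, y] ∧
    x ∈ extSet p q ∧ y ∈ intSet p q ∧
    MapsCyc3 (⇑(lamPerm p q x y)) {a, b, c} a b c ∧
    MapsCyc3 (⇑τ) {a, b, c, x, y} a c b ∧
    MapsSwap (⇑τ) {a, b, c, x, y} x y

/-- The annular crossing pattern (AC-3). -/
def AC3 (p q : ℕ) (τ : Equiv.Perm (Fin (p + q))) : Prop :=
  ∃ a b c d x y : Fin (p + q), List.Pairwise (· ≠ ·) [a, b, c, d, x, y] ∧
    x ∈ extSet p q ∧ y ∈ intSet p q ∧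
    MapsCyc4 (⇑(lamPerm p q x y)) {a, b, c, d} a b c d ∧
    MapsSwap2 (⇑τ) {a, b, c, d, x, y} a b c d ∧
    MapsSwap (⇑τ) {a, b, c, d, x, y} x y

/-- The set `S_ann-nc(p,q)` of `(p,q)`-annular non-crossing permutations. -/
def AnnNC (p q : ℕ) (τ : Equiv.Perm (Fin (p + q))) : Prop :=
  AnnStandard p q τ ∧ ¬ AC1 p q τ ∧ ¬ AC2 p q τ ∧ ¬ AC3 p q τ

/-- A `(p,q)`-connecting set: meets both the external and internal points. -/
def ConnectingBlock (p q : ℕ) (B : Set (Fin (p + q))) : Prop :=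
  (B ∩ extSet p q).Nonempty ∧ (B ∩ intSet p q).Nonempty

/-- `τ` is `(p,q)`-connected: it has a `(p,q)`-connecting orbit. -/
def AnnConnected (p q : ℕ) (τ : Equiv.Perm (Fin (p + q))) : Prop :=
  ∃ A : Set (Fin (p + q)), IsOrbit τ A ∧ ConnectingBlock p q A

/-- A family of blocks has no crossing: no `a < b < c < d` with `a, c` in one block and
`b, d` in a different block. -/
def NoCrossing {n : ℕ} (ρ : Set (Set (Fin n))) : Prop :=
  ¬ ∃ (a b c d : Fin n) (B C : Set (Fin n)), B ∈ ρ ∧ C ∈ ρ ∧ B ≠ C ∧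
      a < b ∧ b < c ∧ c < d ∧ a ∈ B ∧ c ∈ B ∧ b ∈ C ∧ d ∈ C

/-!
If `a` is not fixed by `τ`, multiply both `τ` and `γ` on the left by the transposition
`σ = (a, τ a)`. This leaves `τ⁻¹ γ` unchanged, raises `#(τ)` by one, and changes `#(γ)` by `+1` or
`-1` according as `a` and `τ a` lie in the same orbit of `γ` or not. Descending to `τ = 1` gives
`#(τ) + #(τ⁻¹ γ) ≤ n + #(γ)` for any two permutations of `n` points, with equality exactly when
no step joins two orbits of `γ`.

Equality is tracked through *gaps*: each `x` should have a union `I` of orbits of `τ` such that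
`γ` maps `I ∪ {x}` onto `I ∪ {τ x}`. The transposition `σ` permutes every such `I`, so gaps of
`(τ, γ)` are gaps of `(σ τ, σ γ)`, and the converse holds after correcting `I` by an orbit of `σ γ`.
On the other hand, gaps exist if and only if `τ` induces on its orbits the same permutations as `γ`
and no two orbits of `τ` cross along an orbit of `γ`. For the annular `γ`, whose two orbits are the
boundary circles, this is the non-crossing condition for disconnected permutations.
-/

open Equiv Function Set

variable {α : Type*}

section Induced

variable {f g : α → α} {S U I : Set α} {y z : α}

/-- The forward `f`-trajectory of a point, its starting point excluded, meets `S`. This is exactly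
when `induced f S` takes its meaningful value, and induction on this predicate is induction on the
first hitting time. -/
inductive ReturnsTo (f : α → α) (S : Set α) : α → Prop
  | now {z : α} (h : f z ∈ S) : ReturnsTo f S z
  | later {z : α} (h : f z ∉ S) (hz : ReturnsTo f S (f z)) : ReturnsTo f S z

lemma returnsTo_of_iterate_mem {k : ℕ} (hk : f^[k + 1] z ∈ S) : ReturnsTo f S z := by
  induction k generalizing z with
  | zero => exact .now hk
  | succ k ih =>
    by_cases h : f z ∈ S
    · exact .now h
    · exact .later h (ih hk)

lemma ReturnsTo.exists_iterate_mem (h : ReturnsTo f S z) : ∃ k, 0 < k ∧ f^[k] z ∈ S := by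
  induction h with
  | now h => exact ⟨1, one_pos, h⟩
  | later _ _ ih => exact ih.elim fun k hk => ⟨k + 1, k.succ_pos, hk.2⟩

lemma induced_eq_iterate {k : ℕ} (hk : 0 < k) (hkS : f^[k] z ∈ S)
    (hlt : ∀ i, 0 < i → i < k → f^[i] z ∉ S) : induced f S z = f^[k] z := by
  classical
  have hex : ∃ k, 0 < k ∧ f^[k] z ∈ S := ⟨k, hk, hkS⟩
  have hfind : Nat.find hex = k :=
    (Nat.find_eq_iff hex).2 ⟨⟨hk, hkS⟩, fun i hik hi => hlt i hi.1 hik hi.2⟩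
  rw [induced, dif_pos hex]
  convert rfl using 2
  convert hfind.symm

lemma induced_of_apply_mem (h : f z ∈ S) : induced f S z = f z :=
  induced_eq_iterate (k := 1) one_pos h (by omega)

lemma induced_of_apply_notMem (h : f z ∉ S) (hz : ReturnsTo f S (f z)) :
    induced f S z = induced f S (f z) := by
  classical
  have hex := hz.exists_iterate_mem
  have hmin : ∀ i, 0 < i → i < Nat.find hex → f^[i] (f z) ∉ S :=
    fun i hi hlt hS => Nat.find_min hex hlt ⟨hi, hS⟩
  obtain ⟨hpos, hmem⟩ := Nat.find_spec hex
  rw [induced_eq_iterate hpos hmem hmin]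
  refine induced_eq_iterate (k := Nat.find hex + 1) (Nat.succ_pos _) hmem fun i hi hlt => ?_
  obtain _ | _ | i := i
  · exact absurd hi (lt_irrefl 0)
  · exact h
  · exact hmin (i + 1) i.succ_pos (Nat.lt_of_succ_lt_succ hlt)

lemma ReturnsTo.induced_mem (h : ReturnsTo f S z) : induced f S z ∈ S := by
  induction h with
  | now h => rwa [induced_of_apply_mem h]
  | later h hz ih => rwa [induced_of_apply_notMem h hz]

-- A trajectory can leave `I` only through the step from `y` to `f y`.
lemma ReturnsTo.induced_mem_insert (h : ReturnsTo f S z) (hI : MapsTo f I (insert (f y) I))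
    (hz : f z ∈ insert (f y) I) : induced f S z ∈ insert (induced f S y) I := by
  induction h with
  | @now z h =>
    rw [induced_of_apply_mem h]
    obtain hzy | hzI := hz
    · exact Or.inl (hzy.trans (induced_of_apply_mem (hzy ▸ h)).symm)
    · exact Or.inr hzI
  | @later z h hret ih =>
    rw [induced_of_apply_notMem h hret]
    obtain hzy | hzI := hz
    · rw [hzy] at h hret ⊢
      exact Or.inl (induced_of_apply_notMem h hret).symm
    · exact ih (hI hzI)

lemma ReturnsTo.induced_comp {s : α → α} (h : ReturnsTo f S z) (hs : MapsTo s S S)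
    (hs' : ∀ w ∉ S, s w = w) :
    ReturnsTo (s ∘ f) S z ∧ induced (s ∘ f) S z = s (induced f S z) := by
  induction h with
  | @now z h =>
    have hmem : (s ∘ f) z ∈ S := hs h
    exact ⟨.now hmem, by rw [induced_of_apply_mem hmem, induced_of_apply_mem h, comp_apply]⟩
  | @later z h hret ih =>
    have hfix : (s ∘ f) z = f z := hs' _ h
    have hnot : (s ∘ f) z ∉ S := hfix ▸ h
    have hret' : ReturnsTo (s ∘ f) S ((s ∘ f) z) := hfix.symm ▸ ih.1
    exact ⟨.later hnot hret', by
      rw [induced_of_apply_notMem hnot hret', induced_of_apply_notMem h hret, hfix, ih.2]⟩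

lemma ReturnsTo.induced_congr (h : ReturnsTo f S z) (hfg : EqOn f g U) (hU : MapsTo f U U)
    (hz : z ∈ U) : ReturnsTo g S z ∧ induced g S z = induced f S z := by
  induction h with
  | @now z h =>
    have hg : g z ∈ S := hfg hz ▸ h
    exact ⟨.now hg, by rw [induced_of_apply_mem hg, induced_of_apply_mem h, hfg hz]⟩
  | @later z h hret ih =>
    obtain ⟨hret', heq⟩ := ih (hU hz)
    rw [hfg hz] at hret' heq
    have hg : g z ∉ S := hfg hz ▸ h
    exact ⟨.later hg hret', by
      rw [induced_of_apply_notMem hg hret', induced_of_apply_notMem h hret, heq, hfg hz]⟩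

end Induced

section PermInduced

variable {f : Perm α} {S T C I : Set α} {s x y z : α}

lemma sameCycle_induced (h : ReturnsTo f S z) : f.SameCycle z (induced f S z) := by
  induction h with
  | now h => rw [induced_of_apply_mem h]; exact (Perm.SameCycle.refl f _).apply_right
  | later h hz ih => rw [induced_of_apply_notMem h hz]; exact ih.of_apply_left

lemma ReturnsTo.induced_mem_insert_of_preimage (h : ReturnsTo f S z)
    (hI : f ⁻¹' insert y I = insert x I) (hz : z ∈ insert x I) :
    induced f S z ∈ insert (induced f S (f.symm y)) I := by
  have hstep : MapsTo f (insert x I) (insert (f (f.symm y)) I) := by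
    rw [apply_symm_apply, ← hI]; exact mapsTo_preimage _ _
  exact h.induced_mem_insert (hstep.mono_left (subset_insert x I)) (hstep hz)

lemma induced_symm_apply (hy : y ∈ S) : induced f S (f.symm y) = y := by
  rw [induced_of_apply_mem (by rwa [apply_symm_apply]), apply_symm_apply]

variable [Finite α]

lemma mem_of_sameCycle (hC : MapsTo f C C) (h : f.SameCycle x y) (hx : x ∈ C) : y ∈ C := by
  obtain ⟨k, rfl⟩ := h.exists_nat_pow_eq
  rw [← Perm.iterate_eq_pow]
  exact hC.iterate k hx

lemma preimage_eq_of_mapsTo (hC : MapsTo f C C) : f ⁻¹' C = C :=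
  Set.ext fun x => ⟨mem_of_sameCycle hC (Perm.SameCycle.refl f x).apply_left, fun h => hC h⟩

lemma returnsTo_of_sameCycle (h : f.SameCycle z s) (hs : s ∈ S) : ReturnsTo f S z := by
  obtain ⟨k, hk, -, rfl⟩ := h.exists_pow_eq''
  obtain ⟨k, rfl⟩ := Nat.exists_eq_succ_of_ne_zero hk.ne'
  exact returnsTo_of_iterate_mem (k := k) (by rwa [Perm.iterate_eq_pow])

lemma returnsTo_of_mem (hz : z ∈ S) : ReturnsTo f S z :=
  returnsTo_of_sameCycle (Perm.SameCycle.refl f z) hz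

lemma induced_mem (hz : z ∈ S) : induced f S z ∈ S := (returnsTo_of_mem hz).induced_mem

lemma ReturnsTo.induced_symm_induced (h : ReturnsTo f S z) :
    induced f.symm S (induced f S z) = induced f.symm S (f z) := by
  induction h with
  | now h => rw [induced_of_apply_mem h]
  | @later z h hz ih =>
    have hback : ReturnsTo f.symm S (f z) :=
      returnsTo_of_sameCycle (Perm.sameCycle_inv.2 (sameCycle_induced hz)) hz.induced_mem
    rw [induced_of_apply_notMem h hz, ih,
      induced_of_apply_notMem (z := f (f z)) (by rwa [symm_apply_apply])
        (by rwa [symm_apply_apply]), symm_apply_apply]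

lemma injOn_induced : InjOn (induced f S) S := by
  have hinv : LeftInvOn (induced f.symm S) (induced f S) S := fun z hz => by
    have hzS : f.symm (f z) ∈ S := by rwa [symm_apply_apply]
    rw [(returnsTo_of_mem hz).induced_symm_induced, induced_of_apply_mem hzS, symm_apply_apply]
  exact hinv.injOn

lemma mem_of_mapsTo_induced (hTS : T ⊆ S) (hT : MapsTo (induced f S) T T)
    (h : f.SameCycle x y) (hx : x ∈ T) (hy : y ∈ S) : y ∈ T := by
  let Q : Set α := {z | ReturnsTo f S z ∧ induced f S z ∈ T ∧ (z ∈ S → z ∈ T)}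
  have hfQ : MapsTo f Q Q := by
    rintro z ⟨hz, hzT, -⟩
    cases hz with
    | now hfz =>
      rw [induced_of_apply_mem hfz] at hzT
      exact ⟨returnsTo_of_mem hfz, hT hzT, fun _ => hzT⟩
    | later hfz hret =>
      rw [induced_of_apply_notMem hfz hret] at hzT
      exact ⟨hret, hzT, fun hS => absurd hS hfz⟩
  exact (mem_of_sameCycle hfQ h ⟨returnsTo_of_mem (hTS hx), hT hx, fun _ => hx⟩).2.2 hy

end PermInduced

section Orbits

variable {f g : Perm α} {a b x y : α}

/-- The orbit of `τ` through `x`. -/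
def orbitOf (τ : Perm α) (x : α) : Set α := {y | τ.SameCycle x y}

lemma mem_orbitOf_self (τ : Perm α) (x : α) : x ∈ orbitOf τ x := Perm.SameCycle.refl τ x

lemma mapsTo_orbitOf (f : Perm α) (x : α) : MapsTo f (orbitOf f x) (orbitOf f x) :=
  fun _ hz => Perm.SameCycle.apply_right hz

lemma orbitOf_eq_iff : orbitOf f x = orbitOf f y ↔ f.SameCycle x y :=
  ⟨fun h => h.ge (mem_orbitOf_self f y),
    fun h => Set.ext fun _ => ⟨fun hx => h.symm.trans hx, fun hy => h.trans hy⟩⟩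

lemma setOf_isOrbit (τ : Perm α) : {A | IsOrbit τ A} = range (orbitOf τ) := by
  ext A
  exact exists_congr fun a => eq_comm

lemma numOrbits_one : numOrbits (1 : Perm α) = Nat.card α := by
  have hinj : Injective (orbitOf (1 : Perm α)) := fun x y h =>
    Perm.sameCycle_one.1 (orbitOf_eq_iff.1 h)
  rw [numOrbits, setOf_isOrbit, ← Nat.card_coe_set_eq, Nat.card_range_of_injective hinj]

lemma preimage_swap_eq [DecidableEq α] {C : Set α} (hab : a ∈ C ↔ b ∈ C) : swap a b ⁻¹' C = C := by
  ext w
  rw [mem_preimage, swap_apply_def]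
  split_ifs with ha hb
  exacts [by rw [ha, hab], by rw [hb, hab], Iff.rfl]

variable [Finite α]

lemma isCycleOn_of_eqOn {C : Set α} (h : f.IsCycleOn C) (hfg : EqOn f g C) : g.IsCycleOn C := by
  refine ⟨h.1.congr hfg, fun x hx y hy => ?_⟩
  refine (mem_of_sameCycle (C := C ∩ orbitOf g x) ?_ (h.2 hx hy) ⟨hx, mem_orbitOf_self g x⟩).2
  exact fun z hz => ⟨h.1.mapsTo hz.1, hfg hz.1 ▸ mapsTo_orbitOf g x hz.2⟩

lemma orbitOf_eq_of_isCycleOn {C : Set α} (h : f.IsCycleOn C) (hx : x ∈ C) : orbitOf f x = C :=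
  Set.ext fun _ => ⟨fun hy => mem_of_sameCycle h.1.mapsTo hy hx, fun hy => h.2 hx hy⟩

lemma sameCycle_iff_induced_pair_eq (hab : a ≠ b) :
    f.SameCycle a b ↔ induced f {a, b} a = b := by
  have ha : a ∈ ({a, b} : Set α) := mem_insert _ _
  refine ⟨fun h => (induced_mem ha).resolve_left fun haa => hab.symm ?_,
    fun h => h ▸ sameCycle_induced (returnsTo_of_mem ha)⟩
  exact mem_of_mapsTo_induced (T := {a}) (singleton_subset_iff.2 ha)
    (mapsTo_singleton.2 haa) h rfl (mem_insert_of_mem _ rfl)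

variable [DecidableEq α]

lemma sameCycle_swap_mul_iff (hab : a ≠ b) :
    (swap a b * f).SameCycle a b ↔ ¬ f.SameCycle a b := by
  have ha : a ∈ ({a, b} : Set α) := mem_insert _ _
  have hcomp : induced (swap a b * f) {a, b} a = swap a b (induced f {a, b} a) :=
    ((returnsTo_of_mem ha).induced_comp (s := swap a b)
      (by rintro _ (rfl | rfl) <;> simp)
      (fun w hw => swap_apply_of_ne_of_ne (fun h => hw (.inl h)) fun h => hw (.inr h))).2
  rw [sameCycle_iff_induced_pair_eq hab, sameCycle_iff_induced_pair_eq hab, hcomp]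
  obtain h | h : induced f {a, b} a = a ∨ induced f {a, b} a = b := induced_mem ha
  · simp [h, hab]
  · simp [h, hab]

lemma sameCycle_swap_mul_of_sameCycle (hab : ¬ f.SameCycle a b) (h : f.SameCycle x y) :
    (swap a b * f).SameCycle x y := by
  set g := swap a b * f with hg
  have hne : a ≠ b := by rintro rfl; exact hab (.refl f a)
  have hg_ab : g.SameCycle a b := (sameCycle_swap_mul_iff hne).2 hab
  refine mem_of_sameCycle (C := {z | g.SameCycle x z}) (fun z hz => ?_) h (Perm.SameCycle.refl g x)
  have hgz : g.SameCycle x (g z) := Perm.SameCycle.apply_right hz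
  have hgz' : f z = swap a b (g z) := by simp [hg]
  change g.SameCycle x (f z)
  rw [hgz']
  by_cases hza : g z = a
  · rw [hza, swap_apply_left]; exact (hza ▸ hgz).trans hg_ab
  by_cases hzb : g z = b
  · rw [hzb, swap_apply_right]; exact (hzb ▸ hgz).trans hg_ab.symm
  · rwa [swap_apply_of_ne_of_ne hza hzb]

lemma orbitOf_swap_mul_subset {C : Set α} (hC : MapsTo f C C) (hab : a ∈ C ↔ b ∈ C) (hx : x ∈ C) :
    orbitOf (swap a b * f) x ⊆ C := by
  intro y hy
  refine mem_of_sameCycle (fun z hz => ?_) hy hx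
  have hmem : f z ∈ swap a b ⁻¹' C := by rw [preimage_swap_eq hab]; exact hC hz
  exact hmem

lemma orbitOf_swap_mul_left (hab : ¬ f.SameCycle a b) :
    orbitOf (swap a b * f) a = orbitOf f a ∪ orbitOf f b := by
  refine (orbitOf_swap_mul_subset ((mapsTo_orbitOf f a).union_union (mapsTo_orbitOf f b))
    ⟨fun _ => .inr (mem_orbitOf_self f b), fun _ => .inl (mem_orbitOf_self f a)⟩
    (.inl (mem_orbitOf_self f a))).antisymm ?_
  have hne : a ≠ b := by rintro rfl; exact hab (.refl f a)
  rintro y (hy | hy)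
  · exact sameCycle_swap_mul_of_sameCycle hab hy
  · exact ((sameCycle_swap_mul_iff hne).2 hab).trans (sameCycle_swap_mul_of_sameCycle hab hy)

lemma orbitOf_swap_mul_of_notMem (hab : ¬ f.SameCycle a b) (hxa : ¬ f.SameCycle x a)
    (hxb : ¬ f.SameCycle x b) : orbitOf (swap a b * f) x = orbitOf f x :=
  (orbitOf_swap_mul_subset (mapsTo_orbitOf f x) ⟨fun h => absurd h hxa, fun h => absurd h hxb⟩
    (mem_orbitOf_self f x)).antisymm fun _ hy => sameCycle_swap_mul_of_sameCycle hab hy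

lemma setOf_isOrbit_swap_mul (hab : ¬ f.SameCycle a b) :
    {A | IsOrbit (swap a b * f) A} =
      insert (orbitOf f a ∪ orbitOf f b) ({A | IsOrbit f A} \ {orbitOf f a, orbitOf f b}) := by
  have hne : a ≠ b := by rintro rfl; exact hab (.refl f a)
  have hg : (swap a b * f).SameCycle a b := (sameCycle_swap_mul_iff hne).2 hab
  simp only [setOf_isOrbit]
  refine Subset.antisymm ?_ (insert_subset ⟨a, orbitOf_swap_mul_left hab⟩ ?_)
  · rintro _ ⟨x, rfl⟩
    by_cases hxa : f.SameCycle x a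
    · left
      rw [orbitOf_eq_iff.2 (sameCycle_swap_mul_of_sameCycle hab hxa), orbitOf_swap_mul_left hab]
    by_cases hxb : f.SameCycle x b
    · left
      rw [orbitOf_eq_iff.2 ((sameCycle_swap_mul_of_sameCycle hab hxb).trans hg.symm),
        orbitOf_swap_mul_left hab]
    · right
      rw [orbitOf_swap_mul_of_notMem hab hxa hxb]
      refine ⟨⟨x, rfl⟩, ?_⟩
      rintro (h | h)
      exacts [hxa (orbitOf_eq_iff.1 h), hxb (orbitOf_eq_iff.1 h)]
  · rintro _ ⟨⟨x, rfl⟩, hx⟩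
    exact ⟨x, orbitOf_swap_mul_of_notMem hab (fun h => hx (.inl (orbitOf_eq_iff.2 h)))
      fun h => hx (.inr (orbitOf_eq_iff.2 h))⟩

lemma numOrbits_swap_mul_add_one_of_not_sameCycle (hab : ¬ f.SameCycle a b) :
    numOrbits (swap a b * f) + 1 = numOrbits f := by
  have hunion : orbitOf f a ∪ orbitOf f b ∉ {A | IsOrbit f A} \ {orbitOf f a, orbitOf f b} := by
    rintro ⟨⟨x, hx⟩, -⟩
    have hxa : a ∈ orbitOf f x := hx.le (.inl (mem_orbitOf_self f a))
    have hxb : b ∈ orbitOf f x := hx.le (.inr (mem_orbitOf_self f b))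
    exact hab (hxa.symm.trans hxb)
  have hpair : {orbitOf f a, orbitOf f b} ⊆ {A | IsOrbit f A} := by
    rintro _ (rfl | rfl)
    exacts [⟨a, rfl⟩, ⟨b, rfl⟩]
  have hcard := ncard_sdiff_add_ncard_of_subset hpair
  rw [ncard_pair (mt orbitOf_eq_iff.1 hab)] at hcard
  rw [numOrbits, setOf_isOrbit_swap_mul hab, ncard_insert_of_notMem hunion, add_assoc, hcard,
    numOrbits]

lemma numOrbits_swap_mul_of_sameCycle (hne : a ≠ b) (hab : f.SameCycle a b) :
    numOrbits (swap a b * f) = numOrbits f + 1 := by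
  have hsplit : ¬ (swap a b * f).SameCycle a b := fun h => (sameCycle_swap_mul_iff hne).1 h hab
  simpa [← mul_assoc] using (numOrbits_swap_mul_add_one_of_not_sameCycle hsplit).symm

end Orbits

section Gaps

variable {τ γ σ : Perm α} {x a b : α} {I C : Set α}

/-- `I` is a gap of `τ` at `x`: a union of orbits of `τ` not containing that of `x`, such that the
`γ`-trajectory of `x` runs through points of `I` only until it reaches `τ x`, and `γ` leads from
`I` only to `I` or to `τ x`. When `γ` is a cycle and `τ` is non-crossing, `I` consists of the points
strictly between `x` and `τ x`. -/
structure IsGap (τ γ : Perm α) (x : α) (I : Set α) : Prop where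
  notMem : x ∉ I
  preimage_eq : τ ⁻¹' I = I
  preimage_insert : γ ⁻¹' insert (τ x) I = insert x I

/-- Every point has a gap. Unlike standardness and the absence of crossings, this form of
the non-crossing condition is visibly preserved when a permutation is multiplied into both
`τ` and `γ`. -/
def HasGaps (τ γ : Perm α) : Prop := ∀ x, ∃ I, IsGap τ γ x I

lemma hasGaps_one (γ : Perm α) : HasGaps 1 γ := fun x =>
  ⟨{x}ᶜ, fun h => h rfl, rfl, by rw [Perm.one_apply, insert_eq, union_compl_self, preimage_univ]⟩

namespace IsGap

lemma mul_left (h : IsGap τ γ x I) (hσ : σ ⁻¹' I = I) : IsGap (σ * τ) (σ * γ) x I where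
  notMem := h.notMem
  preimage_eq := by rw [Perm.coe_mul, preimage_comp, hσ, h.preimage_eq]
  preimage_insert := by
    have hinsert : σ ⁻¹' insert (σ (τ x)) I = insert (τ x) I := by
      rw [insert_eq, preimage_union, hσ, ← image_singleton, preimage_image_eq _ σ.injective,
        ← insert_eq]
    rw [Perm.coe_mul, preimage_comp, Perm.mul_apply, hinsert, h.preimage_insert]

lemma inter (h : IsGap τ γ x I) (hτ : τ ⁻¹' C = C) (hγ : γ ⁻¹' C = C) (hx : x ∈ C) :
    IsGap τ γ x (I ∩ C) where
  notMem := fun hxI => h.notMem hxI.1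
  preimage_eq := by rw [preimage_inter, h.preimage_eq, hτ]
  preimage_insert := by
    have hτx : τ x ∈ C := hτ.ge hx
    rw [← insert_inter_of_mem hτx, preimage_inter, h.preimage_insert, hγ, insert_inter_of_mem hx]

lemma union (h : IsGap τ γ x I) (hτ : τ ⁻¹' C = C) (hγ : γ ⁻¹' C = C) (hx : x ∉ C) :
    IsGap τ γ x (I ∪ C) where
  notMem := by rintro (hxI | hxC); exacts [h.notMem hxI, hx hxC]
  preimage_eq := by rw [preimage_union, h.preimage_eq, hτ]
  preimage_insert := by
    rw [← insert_union, preimage_union, h.preimage_insert, hγ, insert_union]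

-- Whole orbits of `γ` may be added to or removed from a gap; doing so with `C` or its complement
-- puts `a` and `b` on the same side.
lemma exists_mem_iff_mem (h : IsGap τ γ x I) (hτ : τ ⁻¹' C = C) (hγ : γ ⁻¹' C = C)
    (ha : a ∈ C) (hb : b ∉ C) : ∃ J, IsGap τ γ x J ∧ (a ∈ J ↔ b ∈ J) := by
  have hτ' : τ ⁻¹' Cᶜ = Cᶜ := by rw [preimage_compl, hτ]
  have hγ' : γ ⁻¹' Cᶜ = Cᶜ := by rw [preimage_compl, hγ]
  by_cases hx : x ∈ C
  · by_cases haI : a ∈ I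
    · exact ⟨I ∪ Cᶜ, h.union hτ' hγ' (not_not.2 hx), iff_of_true (.inl haI) (.inr hb)⟩
    · exact ⟨I ∩ C, h.inter hτ hγ hx, iff_of_false (fun h => haI h.1) fun h => hb h.2⟩
  · by_cases hbI : b ∈ I
    · exact ⟨I ∪ C, h.union hτ hγ hx, iff_of_true (.inr ha) (.inl hbI)⟩
    · exact ⟨I ∩ Cᶜ, h.inter hτ' hγ' hx, iff_of_false (fun h => h.2 ha) fun h => hbI h.1⟩

variable [Finite α]

lemma disjoint (h : IsGap τ γ x I) : Disjoint (orbitOf τ x) I :=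
  disjoint_left.2 fun _ hy hyI => h.notMem
    (mem_of_sameCycle (fun _ hz => h.preimage_eq.ge hz) (Perm.SameCycle.symm hy) hyI)

lemma induced_eq (h : IsGap τ γ x I) : induced γ (orbitOf τ x) x = τ x := by
  have hτx : τ x ∈ orbitOf τ x := mapsTo_orbitOf τ x (mem_orbitOf_self τ x)
  have hret : ReturnsTo γ (orbitOf τ x) x := returnsTo_of_mem (mem_orbitOf_self τ x)
  have hmem := hret.induced_mem_insert_of_preimage h.preimage_insert (mem_insert x I)
  rw [induced_symm_apply hτx] at hmem
  exact hmem.resolve_right (h.disjoint.notMem_of_mem_left hret.induced_mem)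

lemma sameCycle (h : IsGap τ γ x I) : γ.SameCycle x (τ x) :=
  h.induced_eq ▸ sameCycle_induced (returnsTo_of_mem (mem_orbitOf_self τ x))

end IsGap

lemma HasGaps.preimage_eq_of_preimage_eq [Finite α] (h : HasGaps τ γ) (hC : γ ⁻¹' C = C) :
    τ ⁻¹' C = C :=
  preimage_eq_of_mapsTo fun x hx =>
    (h x).elim fun _ hI => mem_of_sameCycle (fun _ hz => hC.ge hz) hI.sameCycle hx

variable [Finite α] [DecidableEq α]

lemma hasGaps_swap_mul_iff (ha : τ a ≠ a) (hγ : γ.SameCycle a (τ a)) :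
    HasGaps (swap a (τ a) * τ) (swap a (τ a) * γ) ↔ HasGaps τ γ := by
  constructor <;> intro h x <;> obtain ⟨I, hI⟩ := h x
  · have hsplit : ¬ (swap a (τ a) * γ).SameCycle a (τ a) := fun h =>
      (sameCycle_swap_mul_iff ha.symm).1 h hγ
    have hC : (swap a (τ a) * γ) ⁻¹' orbitOf (swap a (τ a) * γ) a = orbitOf (swap a (τ a) * γ) a :=
      preimage_eq_of_mapsTo (mapsTo_orbitOf _ a)
    obtain ⟨J, hJ, haJ⟩ := hI.exists_mem_iff_mem (h.preimage_eq_of_preimage_eq hC) hC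
      (mem_orbitOf_self _ a) hsplit
    have hJ' := hJ.mul_left (preimage_swap_eq haJ)
    rw [← mul_assoc, ← mul_assoc, swap_mul_self, one_mul, one_mul] at hJ'
    exact ⟨J, hJ'⟩
  · have haI : a ∈ I ↔ τ a ∈ I := by rw [← mem_preimage, hI.preimage_eq]
    exact ⟨I, hI.mul_left (preimage_swap_eq haI)⟩

end Gaps

theorem numOrbits_add_numOrbits_inv_mul_le_and_eq_iff [Finite α] (τ γ : Perm α) :
    numOrbits τ + numOrbits (τ⁻¹ * γ) ≤ Nat.card α + numOrbits γ ∧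
      (numOrbits τ + numOrbits (τ⁻¹ * γ) = Nat.card α + numOrbits γ ↔ HasGaps τ γ) := by
  classical
  have := Fintype.ofFinite α
  induction hn : τ.support.card using Nat.strong_induction_on generalizing τ γ with
  | _ n ih =>
    by_cases hτ : τ = 1
    · subst hτ
      simp [numOrbits_one, hasGaps_one]
    obtain ⟨a, ha⟩ : ∃ a, τ a ≠ a := by
      by_contra! h
      exact hτ (Perm.ext h)
    have hsupp : (swap a (τ a) * τ).support.card < n := hn ▸ Perm.card_support_swap_mul ha
    obtain ⟨hle, heq⟩ := ih _ hsupp (swap a (τ a) * τ) (swap a (τ a) * γ) rfl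
    have hinv : (swap a (τ a) * τ)⁻¹ * (swap a (τ a) * γ) = τ⁻¹ * γ := by group
    have hτ' : numOrbits (swap a (τ a) * τ) = numOrbits τ + 1 :=
      numOrbits_swap_mul_of_sameCycle ha.symm (Perm.SameCycle.refl τ a).apply_right
    rw [hinv, hτ'] at hle heq
    by_cases hγ : γ.SameCycle a (τ a)
    · rw [numOrbits_swap_mul_of_sameCycle ha.symm hγ] at hle heq
      rw [hasGaps_swap_mul_iff ha hγ] at heq
      exact ⟨by omega, by rw [← heq]; omega⟩
    · have hγ' := numOrbits_swap_mul_add_one_of_not_sameCycle hγ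
      have hno : ¬ HasGaps τ γ := fun h => (h a).elim fun _ hI => hγ hI.sameCycle
      exact ⟨by omega, iff_of_false (by omega) hno⟩

section Crossings

variable [Finite α] {τ γ : Perm α} {x u : α} {S : Set α}

/-- `τ` induces on each of its orbits the same permutation as `γ`. -/
def IsStandard (τ γ : Perm α) : Prop := ∀ x, induced γ (orbitOf τ x) x = τ x

/-- Two orbits of `τ` cross along a cycle of `γ`: this is the pattern (AC-1) for an arbitrary
permutation `γ`. -/
def HasCrossing (τ γ : Perm α) : Prop :=
  ∃ a b c d : α, List.Pairwise (· ≠ ·) [a, b, c, d] ∧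
    MapsCyc4 γ {a, b, c, d} a b c d ∧ MapsSwap2 τ {a, b, c, d} a b c d

lemma IsStandard.sameCycle (h : IsStandard τ γ) (x : α) : γ.SameCycle x (τ x) :=
  h x ▸ sameCycle_induced (returnsTo_of_mem (mem_orbitOf_self τ x))

lemma HasGaps.isStandard (h : HasGaps τ γ) : IsStandard τ γ := fun x =>
  (h x).elim fun _ hI => hI.induced_eq

lemma HasGaps.exists_mem_insert (h : HasGaps τ γ) {a b : α} (hab : γ.SameCycle a b) :
    ∃ x I, τ.SameCycle a x ∧ IsGap τ γ x I ∧ b ∈ insert x I := by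
  refine mem_of_sameCycle (C := {z | ∃ x I, τ.SameCycle a x ∧ IsGap τ γ x I ∧ z ∈ insert x I})
    ?_ hab ?_
  · rintro z ⟨x, I, hx, hI, hz⟩
    obtain hzx | hzI : γ z ∈ insert (τ x) I := hI.preimage_insert.ge hz
    · obtain ⟨J, hJ⟩ := h (τ x)
      exact ⟨τ x, J, hx.apply_right, hJ, .inl hzx⟩
    · exact ⟨x, I, hx, hI, .inr hzI⟩
  · obtain ⟨I, hI⟩ := h a
    exact ⟨a, I, .refl τ a, hI, mem_insert a I⟩

lemma HasGaps.not_hasCrossing (h : HasGaps τ γ) : ¬ HasCrossing τ γ := by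
  rintro ⟨a, b, c, d, hne, ⟨hab, hbc, -, hda⟩, hac, hca, hbd, -⟩
  set S : Set α := {a, b, c, d}
  have haS : a ∈ S := by simp [S]
  have hbS : b ∈ S := by simp [S]
  have hdS : d ∈ S := by simp [S]
  have hneab : ¬ τ.SameCycle a b := fun hab => by
    have hb : b ∈ ({a, c} : Set α) :=
      mem_of_mapsTo_induced (f := τ) (S := S) (by simp [S, insert_subset_iff])
        (by rintro _ (rfl | rfl) <;> simp [hac, hca]) hab (mem_insert a _) hbS
    obtain rfl | rfl := hb <;> simp at hne
  have hac' : τ.SameCycle a c := hac ▸ sameCycle_induced (returnsTo_of_mem haS)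
  have hbd' : τ.SameCycle b d := hbd ▸ sameCycle_induced (returnsTo_of_mem hbS)
  obtain ⟨x, I, hax, hI, hbI⟩ :=
    h.exists_mem_insert (hab ▸ sameCycle_induced (returnsTo_of_mem haS) : γ.SameCycle a b)
  replace hbI : b ∈ I := hbI.resolve_left fun hbx => hneab (hbx ▸ hax)
  have hdI : d ∈ I := mem_of_sameCycle (fun _ hz => hI.preimage_eq.ge hz) hbd' hbI
  have haI : a ∉ I := hI.disjoint.notMem_of_mem_left hax.symm
  have hcI : c ∉ I := hI.disjoint.notMem_of_mem_left (hax.symm.trans hac')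
  -- `γ` leaves `I` only to `τ x`, yet the first exits from `b` and `d` into `S` are `c ≠ a`.
  have hexit_c := (returnsTo_of_mem hbS).induced_mem_insert_of_preimage hI.preimage_insert
    (mem_insert_of_mem x hbI)
  have hexit_a := (returnsTo_of_mem hdS).induced_mem_insert_of_preimage hI.preimage_insert
    (mem_insert_of_mem x hdI)
  rw [hbc] at hexit_c
  rw [hda] at hexit_a
  have hc_eq_a : c = a := (hexit_c.resolve_right hcI).trans (hexit_a.resolve_right haI).symm
  simp [hc_eq_a] at hne

/-- The points strictly between `x` and `τ x` along the cycle of `γ` through `x`, on the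
assumption that `τ x` is the first point of the orbit of `x` that `γ` reaches from `x`. -/
def gapOf (τ γ : Perm α) (x : α) : Set α :=
  {z | z ∉ orbitOf τ x ∧ γ.SameCycle x z ∧ induced γ (orbitOf τ x) z = τ x}

lemma IsStandard.mem_insert_gapOf_iff (h : IsStandard τ γ) {z : α} :
    z ∈ insert x (gapOf τ γ x) ↔ γ.SameCycle x z ∧ induced γ (orbitOf τ x) z = τ x := by
  constructor
  · rintro (rfl | ⟨-, hz⟩)
    exacts [⟨.refl γ z, h z⟩, hz]
  · intro hz
    by_cases hzx : z ∈ orbitOf τ x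
    · exact .inl (injOn_induced hzx (mem_orbitOf_self τ x) (hz.2.trans (h x).symm))
    · exact .inr ⟨hzx, hz⟩

lemma IsStandard.preimage_insert_gapOf (h : IsStandard τ γ) :
    γ ⁻¹' insert (τ x) (gapOf τ γ x) = insert x (gapOf τ γ x) := by
  ext z
  have hτx : τ x ∈ orbitOf τ x := mapsTo_orbitOf τ x (mem_orbitOf_self τ x)
  rw [h.mem_insert_gapOf_iff, mem_preimage]
  by_cases hγz : γ z ∈ orbitOf τ x
  · rw [induced_of_apply_mem hγz]
    refine ⟨fun hz => ?_, fun hz => .inl hz.2⟩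
    have hzx : γ z = τ x := hz.resolve_right fun hgap => hgap.1 hγz
    exact ⟨(hzx ▸ h.sameCycle x : γ.SameCycle x (γ z)).of_apply_right, hzx⟩
  · have hstep (hz : γ.SameCycle x z) :
        induced γ (orbitOf τ x) z = induced γ (orbitOf τ x) (γ z) :=
      induced_of_apply_notMem hγz
        (returnsTo_of_sameCycle hz.apply_right.symm (mem_orbitOf_self τ x))
    constructor
    · rintro (hzx | ⟨-, hz, hzx⟩)
      · exact absurd (hzx ▸ hτx) hγz
      · exact ⟨hz.of_apply_right, (hstep hz.of_apply_right).trans hzx⟩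
    · exact fun ⟨hz, hzx⟩ => .inr ⟨hγz, hz.apply_right, (hstep hz).symm.trans hzx⟩

lemma induced_apply_eq (hu : u ∈ S) (hτu : τ u ∈ S) (hne : τ u ≠ u)
    (hS : ∀ y ∈ S, τ.SameCycle u y → y = u ∨ y = τ u) : induced τ S (τ u) = u := by
  have hcycle : τ.SameCycle u (induced τ S (τ u)) :=
    (sameCycle_induced (returnsTo_of_mem hτu)).of_apply_left
  refine (hS _ (induced_mem hτu) hcycle).resolve_right fun heq => hne ?_
  exact injOn_induced hτu hu (heq.trans (induced_of_apply_mem hτu).symm)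

lemma mapsCyc4_of_induced_eq {a b c d : α} (hne : List.Pairwise (· ≠ ·) [a, b, c, d])
    (had : γ.SameCycle a d) (hab : induced γ {a, b, c, d} a = b)
    (hbc : induced γ {a, b, c, d} b = c) : MapsCyc4 γ {a, b, c, d} a b c d := by
  simp only [List.pairwise_cons, List.mem_cons, forall_eq_or_imp] at hne
  obtain ⟨⟨hab', hac', had', -⟩, ⟨hbc', hbd', -⟩, ⟨hcd', -⟩, -⟩ := hne
  have haS : a ∈ ({a, b, c, d} : Set α) := .inl rfl
  have hbS : b ∈ ({a, b, c, d} : Set α) := .inr (.inl rfl)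
  have hcS : c ∈ ({a, b, c, d} : Set α) := .inr (.inr (.inl rfl))
  have hdS : d ∈ ({a, b, c, d} : Set α) := .inr (.inr (.inr rfl))
  have hcd : induced γ {a, b, c, d} c = d := by
    obtain hc | hc | hc | hc := induced_mem (f := γ) hcS
    · have hd : d ∈ ({a, b, c} : Set α) := by
        refine mem_of_mapsTo_induced (f := γ) (S := {a, b, c, d}) ?_ ?_ had (mem_insert a _) hdS
        · rintro _ (rfl | rfl | rfl) <;> assumption
        · rintro _ (rfl | rfl | rfl) <;> simp only [hab, hbc, hc, mem_insert_iff, true_or, or_true]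
          exact .inr (.inr rfl)
      obtain rfl | rfl | rfl := hd
      exacts [absurd rfl had', absurd rfl hbd', absurd rfl hcd']
    · exact absurd (injOn_induced haS hcS (hab.trans hc.symm)) hac'
    · exact absurd (injOn_induced hbS hcS (hbc.trans hc.symm)) hbc'
    · exact hc
  have hda : induced γ {a, b, c, d} d = a := by
    obtain hd | hd | hd | hd := induced_mem (f := γ) hdS
    · exact hd
    · exact absurd (injOn_induced haS hdS (hab.trans hd.symm)) had'
    · exact absurd (injOn_induced hbS hdS (hbc.trans hd.symm)) hbd'
    · exact absurd (injOn_induced hcS hdS (hcd.trans hd.symm)) hcd'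
  exact ⟨hab, hbc, hcd, hda⟩

lemma mapsCyc4_of_preimage_insert {a b c d : α} {I : Set α}
    (hne : List.Pairwise (· ≠ ·) [a, b, c, d]) (hI : γ ⁻¹' insert c I = insert a I)
    (ha : a ∉ I) (hb : b ∈ I) (hd : d ∉ I) (hab : γ.SameCycle a b)
    (had : γ.SameCycle a d) : MapsCyc4 γ {a, b, c, d} a b c d := by
  have hab' : a ≠ b := fun h => ha (h ▸ hb)
  have haS : a ∈ ({a, b, c, d} : Set α) := .inl rfl
  have hbS : b ∈ ({a, b, c, d} : Set α) := .inr (.inl rfl)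
  have hcS : c ∈ ({a, b, c, d} : Set α) := .inr (.inr (.inl rfl))
  have hexit {w : α} (hwS : w ∈ ({a, b, c, d} : Set α)) (hw : w ∈ insert a I) :
      induced γ {a, b, c, d} w = b ∨ induced γ {a, b, c, d} w = c := by
    have hmem := (returnsTo_of_mem hwS).induced_mem_insert_of_preimage hI hw
    rw [induced_symm_apply hcS] at hmem
    obtain hwc | hwI := hmem
    · exact .inr hwc
    obtain hwa | hwb | hwc | hwd := induced_mem (f := γ) hwS
    exacts [absurd (hwa ▸ hwI) ha, .inl hwb, .inr hwc, absurd (hwd ▸ hwI) hd]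
  have hbc : induced γ {a, b, c, d} b = c := (hexit hbS (.inr hb)).resolve_left fun hbb => hab' <|
    mem_of_mapsTo_induced (T := {b}) (singleton_subset_iff.2 hbS) (mapsTo_singleton.2 hbb)
      hab.symm rfl haS
  exact mapsCyc4_of_induced_eq hne had ((hexit haS (.inl rfl)).resolve_right fun hac =>
    hab' (injOn_induced haS hbS (hac.trans hbc.symm))) hbc

lemma IsStandard.apply_mem_gapOf (h : IsStandard τ γ) (hcross : ¬ HasCrossing τ γ) {z : α}
    (hz : z ∈ gapOf τ γ x) : τ z ∈ gapOf τ γ x := by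
  by_contra hτz
  have hzx : ¬ τ.SameCycle x z := hz.1
  have hτzx : ¬ τ.SameCycle x (τ z) := fun h => hzx h.of_apply_right
  have hxτz : γ.SameCycle x (τ z) := hz.2.1.trans (h.sameCycle z)
  have hxx : τ.SameCycle x (τ x) := (Perm.SameCycle.refl τ x).apply_right
  have hτzz : τ z ≠ z := fun heq => hτz (heq.symm ▸ hz)
  have hτxx : τ x ≠ x := fun heq => by
    have hmem : induced γ (orbitOf τ x) (τ z) ∈ orbitOf τ x :=
      (returnsTo_of_sameCycle hxτz.symm (mem_orbitOf_self τ x)).induced_mem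
    exact hτz ⟨hτzx, hxτz, ((Perm.SameCycle.eq_of_left hmem heq).symm.trans heq.symm)⟩
  have hne : List.Pairwise (· ≠ ·) [x, z, τ x, τ z] := by
    grind [Perm.SameCycle.refl, Equiv.injective]
  refine hcross ⟨x, z, τ x, τ z, hne, mapsCyc4_of_preimage_insert hne h.preimage_insert_gapOf
    (fun hx => hx.1 (mem_orbitOf_self τ x)) hz hτz hz.2.1 hxτz, ?_⟩
  have hx_pair : ∀ y ∈ ({x, z, τ x, τ z} : Set α), τ.SameCycle x y → y = x ∨ y = τ x := by
    rintro _ (rfl | rfl | rfl | rfl) hy <;> simp_all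
  have hz_pair : ∀ y ∈ ({x, z, τ x, τ z} : Set α), τ.SameCycle z y → y = z ∨ y = τ z := by
    rintro _ (rfl | rfl | rfl | rfl) hy <;> simp_all [Perm.sameCycle_comm]
  exact ⟨induced_of_apply_mem (by simp), induced_apply_eq (by simp) (by simp) hτxx hx_pair,
    induced_of_apply_mem (by simp), induced_apply_eq (by simp) (by simp) hτzz hz_pair⟩

lemma hasGaps_iff : HasGaps τ γ ↔ IsStandard τ γ ∧ ¬ HasCrossing τ γ := by
  refine ⟨fun h => ⟨h.isStandard, h.not_hasCrossing⟩, fun ⟨hstd, hcross⟩ x => ⟨gapOf τ γ x, ?_⟩⟩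
  exact ⟨fun hx => hx.1 (mem_orbitOf_self τ x),
    preimage_eq_of_mapsTo fun _ hz => hstd.apply_mem_gapOf hcross hz, hstd.preimage_insert_gapOf⟩

end Crossings

lemma forall_isOrbit_induced_eq_iff [Finite α] {τ γ δ : Perm α} {C : Set α} (hτ : MapsTo τ C C)
    (hδ : MapsTo δ C C) (hδγ : EqOn δ γ C) :
    (∀ A, IsOrbit τ A → ∀ b ∈ A ∩ C, induced τ (A ∩ C) b = induced δ (A ∩ C) b) ↔
      ∀ x ∈ C, induced γ (orbitOf τ x) x = τ x := by
  have hstd {x : α} (hx : x ∈ C) : induced τ (orbitOf τ x ∩ C) x =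
      induced δ (orbitOf τ x ∩ C) x ↔ induced γ (orbitOf τ x) x = τ x := by
    have hsub : orbitOf τ x ⊆ C := fun y hy => mem_of_sameCycle hτ hy hx
    rw [inter_eq_left.2 hsub,
      induced_of_apply_mem (mapsTo_orbitOf τ x (mem_orbitOf_self τ x)),
      ← ((returnsTo_of_mem (mem_orbitOf_self τ x)).induced_congr hδγ hδ hx).2, eq_comm]
  refine ⟨fun h x hx => (hstd hx).1 (h _ ⟨x, rfl⟩ x ⟨mem_orbitOf_self τ x, hx⟩), ?_⟩
  rintro h _ ⟨a, rfl⟩ b ⟨hab, hb⟩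
  have hA : {y | τ.SameCycle a y} = orbitOf τ b := orbitOf_eq_iff.2 hab
  rw [hA]
  exact (hstd hb).2 (h b hb)

section Annular

variable {p q : ℕ} {x : Fin (p + q)} {τ : Perm (Fin (p + q))}

lemma compl_extSet (p q : ℕ) : (extSet p q)ᶜ = intSet p q :=
  Set.ext fun x => not_lt (a := (x : ℕ))

lemma setOf_mem_take_finRange (p q : ℕ) :
    {x | x ∈ (List.finRange (p + q)).take p} = extSet p q := by
  ext x
  change x ∈ List.take p _ ↔ (x : ℕ) < p
  simp only [List.mem_take_iff_getElem, List.getElem_finRange, List.length_finRange, lt_min_iff,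
    Fin.ext_iff, Fin.val_cast]
  exact ⟨fun ⟨j, hj, hjx⟩ => hjx ▸ hj.1, fun hx => ⟨x, ⟨hx, x.2⟩, rfl⟩⟩

lemma setOf_mem_drop_finRange (p q : ℕ) :
    {x | x ∈ (List.finRange (p + q)).drop p} = intSet p q := by
  ext x
  change x ∈ List.drop p _ ↔ p ≤ (x : ℕ)
  simp only [List.mem_drop_iff_getElem, List.getElem_finRange, List.length_finRange, Fin.ext_iff,
    Fin.val_cast]
  exact ⟨fun ⟨j, _, hjx⟩ => (Nat.le_add_right p j).trans_eq hjx,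
    fun hx => ⟨x - p, by omega, Nat.add_sub_of_le hx⟩⟩

lemma isCycleOn_gammaExt (p q : ℕ) : (gammaExt p q).IsCycleOn (extSet p q) :=
  setOf_mem_take_finRange p q ▸
    ((List.nodup_finRange _).sublist (List.take_sublist _ _)).isCycleOn_formPerm

lemma isCycleOn_gammaInt (p q : ℕ) : (gammaInt p q).IsCycleOn (intSet p q) :=
  setOf_mem_drop_finRange p q ▸
    ((List.nodup_finRange _).sublist (List.drop_sublist _ _)).isCycleOn_formPerm

lemma gammaExt_eqOn_gammaAnn (p q : ℕ) : EqOn (gammaExt p q) (gammaAnn p q) (extSet p q) := by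
  intro x hx
  have hfix : gammaInt p q x = x := List.formPerm_apply_of_notMem fun h =>
    (compl_extSet p q).ge ((setOf_mem_drop_finRange p q).le h) hx
  rw [gammaAnn, Perm.mul_apply, hfix]

lemma gammaInt_eqOn_gammaAnn (p q : ℕ) : EqOn (gammaInt p q) (gammaAnn p q) (intSet p q) := by
  intro x hx
  have hfix : gammaExt p q (gammaInt p q x) = gammaInt p q x :=
    List.formPerm_apply_of_notMem fun h => (compl_extSet p q).ge
      ((isCycleOn_gammaInt p q).1.mapsTo hx) ((setOf_mem_take_finRange p q).le h)
  rw [gammaAnn, Perm.mul_apply, hfix]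

lemma orbitOf_gammaAnn_of_mem_extSet (hx : x ∈ extSet p q) :
    orbitOf (gammaAnn p q) x = extSet p q :=
  orbitOf_eq_of_isCycleOn
    (isCycleOn_of_eqOn (isCycleOn_gammaExt p q) (gammaExt_eqOn_gammaAnn p q)) hx

lemma orbitOf_gammaAnn_of_mem_intSet (hx : x ∈ intSet p q) :
    orbitOf (gammaAnn p q) x = intSet p q :=
  orbitOf_eq_of_isCycleOn
    (isCycleOn_of_eqOn (isCycleOn_gammaInt p q) (gammaInt_eqOn_gammaAnn p q)) hx

lemma mem_extSet_or_mem_intSet (x : Fin (p + q)) : x ∈ extSet p q ∨ x ∈ intSet p q :=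
  lt_or_ge (x : ℕ) p

lemma numOrbits_gammaAnn (hp : 0 < p) (hq : 0 < q) : numOrbits (gammaAnn p q) = 2 := by
  let i : Fin (p + q) := ⟨0, by omega⟩
  let j : Fin (p + q) := ⟨p, by omega⟩
  have hi : i ∈ extSet p q := hp
  have hj : j ∈ intSet p q := le_refl p
  have horbits : {A | IsOrbit (gammaAnn p q) A} = {extSet p q, intSet p q} := by
    rw [setOf_isOrbit]
    refine Subset.antisymm ?_ (pair_subset ⟨i, orbitOf_gammaAnn_of_mem_extSet hi⟩
      ⟨j, orbitOf_gammaAnn_of_mem_intSet hj⟩)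
    rintro _ ⟨x, rfl⟩
    exact (mem_extSet_or_mem_intSet x).imp orbitOf_gammaAnn_of_mem_extSet
      orbitOf_gammaAnn_of_mem_intSet
  have hne : extSet p q ≠ intSet p q := fun h => (compl_extSet p q).ge (h.le hi) hi
  rw [numOrbits, horbits, ncard_pair hne]

lemma annConnected_iff :
    AnnConnected p q τ ↔ ∃ x ∈ extSet p q, ∃ y ∈ intSet p q, τ.SameCycle x y := by
  constructor
  · rintro ⟨_, ⟨a, rfl⟩, ⟨x, hax, hx⟩, ⟨y, hay, hy⟩⟩
    exact ⟨x, hx, y, hy, hax.symm.trans hay⟩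
  · rintro ⟨x, hx, y, hy, hxy⟩
    exact ⟨orbitOf τ x, ⟨x, rfl⟩, ⟨x, mem_orbitOf_self τ x, hx⟩, ⟨y, hxy, hy⟩⟩

lemma IsStandard.not_annConnected (h : IsStandard τ (gammaAnn p q)) : ¬ AnnConnected p q τ := by
  rw [annConnected_iff]
  rintro ⟨x, hx, y, hy, hxy⟩
  have hext : MapsTo τ (extSet p q) (extSet p q) := fun z hz =>
    (orbitOf_gammaAnn_of_mem_extSet hz).le (h.sameCycle z)
  exact (compl_extSet p q).ge hy (mem_of_sameCycle hext hxy hx)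

lemma annStandard_iff (hdisc : ¬ AnnConnected p q τ) :
    AnnStandard p q τ ↔ IsStandard τ (gammaAnn p q) := by
  have hconn := mt annConnected_iff.2 hdisc
  push Not at hconn
  have hext : MapsTo τ (extSet p q) (extSet p q) := fun x hx =>
    (mem_extSet_or_mem_intSet _).resolve_right fun hy =>
      hconn x hx _ hy (Perm.SameCycle.refl τ x).apply_right
  have hint : MapsTo τ (intSet p q) (intSet p q) := fun x hx =>
    (mem_extSet_or_mem_intSet _).resolve_left fun hy =>
      hconn _ hy x hx (Perm.SameCycle.refl τ x).apply_left
  have hblocks : ∀ A, IsOrbit τ A → (A ∩ extSet p q).Nonempty → ¬ (A ∩ intSet p q).Nonempty :=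
    fun A hA hAext hAint => hdisc ⟨A, hA, hAext, hAint⟩
  have hstd_ext := forall_isOrbit_induced_eq_iff hext (isCycleOn_gammaExt p q).1.mapsTo
    (gammaExt_eqOn_gammaAnn p q)
  have hstd_int := forall_isOrbit_induced_eq_iff hint (isCycleOn_gammaInt p q).1.mapsTo
    (gammaInt_eqOn_gammaAnn p q)
  constructor
  · rintro ⟨hstd, -⟩ x
    exact (mem_extSet_or_mem_intSet x).elim (hstd_ext.1 (fun A hA => (hstd A hA).1) x)
      (hstd_int.1 (fun A hA => (hstd A hA).2) x)
  · exact fun hstd => ⟨fun A hA => ⟨hstd_ext.2 (fun x _ => hstd x) A hA,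
      hstd_int.2 (fun x _ => hstd x) A hA⟩, fun A hA hAext hAint => (hblocks A hA hAext hAint).elim⟩

lemma AC2.annConnected (h : AC2 p q τ) : AnnConnected p q τ := by
  obtain ⟨a, b, c, x, y, -, hx, hy, -, -, hxy, -⟩ := h
  exact annConnected_iff.2 ⟨x, hx, y, hy, hxy ▸ sameCycle_induced (returnsTo_of_mem (by simp))⟩

lemma AC3.annConnected (h : AC3 p q τ) : AnnConnected p q τ := by
  obtain ⟨a, b, c, d, x, y, -, hx, hy, -, -, hxy, -⟩ := h
  exact annConnected_iff.2 ⟨x, hx, y, hy, hxy ▸ sameCycle_induced (returnsTo_of_mem (by simp))⟩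

lemma annNC_iff (hdisc : ¬ AnnConnected p q τ) : AnnNC p q τ ↔ HasGaps τ (gammaAnn p q) := by
  rw [hasGaps_iff, ← annStandard_iff hdisc]
  exact ⟨fun h => ⟨h.1, h.2.1⟩,
    fun h => ⟨h.1, h.2, mt AC2.annConnected hdisc, mt AC3.annConnected hdisc⟩⟩

end Annular

theorem stmt_16_general (p q : ℕ) (hp : 0 < p) (hq : 0 < q) (τ : Equiv.Perm (Fin (p + q))) :
    numOrbits τ + numOrbits (τ⁻¹ * gammaAnn p q) ≤ p + q + 2 ∧
      (¬ AnnConnected p q τ ∧ AnnNC p q τ ↔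
        numOrbits τ + numOrbits (τ⁻¹ * gammaAnn p q) = p + q + 2) := by
  obtain ⟨hle, heq⟩ := numOrbits_add_numOrbits_inv_mul_le_and_eq_iff τ (gammaAnn p q)
  rw [Nat.card_eq_fintype_card, Fintype.card_fin, numOrbits_gammaAnn hp hq] at hle heq
  rw [heq]
  exact ⟨hle, fun h => (annNC_iff h.1).1 h.2,
    fun h => ⟨h.isStandard.not_annConnected, (annNC_iff h.isStandard.not_annConnected).2 h⟩⟩

/-- Theorem 6.1 2°: a `(p,q)`-disconnected permutation `τ` of `[p+q]` satisfies
`#(τ) + #(τ⁻¹γ) ≤ p+q+2`, and `τ ∈ S_ann-nc(p,q)` iff this inequality is an equality. -/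
theorem stmt_16 (p q : ℕ) (hp : 0 < p) (hq : 0 < q)
    (τ : Equiv.Perm (Fin (p + q))) (hdisc : ¬ AnnConnected p q τ) :
    numOrbits τ + numOrbits (τ⁻¹ * gammaAnn p q) ≤ p + q + 2 ∧
      (AnnNC p q τ ↔ numOrbits τ + numOrbits (τ⁻¹ * gammaAnn p q) = p + q + 2) := by
  simpa only [hdisc, not_false_eq_true, true_and] using stmt_16_general p q hp hq τ
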